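/- arXiv:1309.5712 — 2 statements merged into one kernel-verified Lean document; each statement's English description precedes it below -/
import Mathlib

section
/- Let s ≥ 6 and d be positive integers, a_1 = 0, a_2, ..., a_s integers with gcd of the nonzero a_i equal to 1, and B_1, ..., B_s nonempty subsets of Z/dZ with 0 ∈ B_1 and |B_1| ≥ |B_i| for all i. Let B~ = ∪_{i=1}^s ({a_i} × B_i) ⊆ Z × Z/dZ. If |B~ + B~| < 2.5 |B~|, then there exists a subgroup H of Z/dZ with |H| < (3/2)|B_1| such that B_1 lies in a single coset of H. -/
open Pointwise

/-- Isoperimetric inequality (Olson / Hamidoune, abelian case). -/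
lemma iso_ineq {G : Type*} [AddCommGroup G] [Fintype G] [DecidableEq G]
    (Y : Finset G) (hY0 : (0 : G) ∈ Y) (H : AddSubgroup G)
    (hH : H = AddSubgroup.closure (Y : Set G)) (X : Finset G) (hX : X.Nonempty)
    (hXH : ∀ x ∈ X, x ∈ H) (hne : ∃ h ∈ H, h ∉ X + Y) :
    2 * X.card + Y.card ≤ 2 * (X + Y).card := by
  classical
  have hYH : ∀ y ∈ Y, y ∈ H := fun y hy => hH ▸ AddSubgroup.subset_closure hy
  set f : Finset G → ℤ := fun Z => ((Z + Y).card : ℤ) - Z.card with hf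
  set Hf : Finset G := Finset.univ.filter (· ∈ H) with hHf
  have memHf : ∀ z, z ∈ Hf ↔ z ∈ H := by simp [hHf]
  set C : Finset (Finset G) := Finset.univ.filter
    (fun Z => Z.Nonempty ∧ (∀ x ∈ Z, x ∈ H) ∧ ∃ h ∈ H, h ∉ Z + Y) with hC
  have memC : ∀ Z, Z ∈ C ↔ (Z.Nonempty ∧ (∀ x ∈ Z, x ∈ H) ∧ ∃ h ∈ H, h ∉ Z + Y) := by
    simp [hC]
  have hXC : X ∈ C := (memC X).2 ⟨hX, hXH, hne⟩
  obtain ⟨Z0, hZ0, hmin0⟩ := Finset.exists_min_image C f ⟨X, hXC⟩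
  obtain ⟨Z, hZ, hmin⟩ := Finset.exists_min_image (C.filter (fun W => f W = f Z0))
    Finset.card ⟨Z0, by simp [hZ0]⟩
  rw [Finset.mem_filter] at hZ
  obtain ⟨hZC, hfZ⟩ := hZ
  have m1 : ∀ W ∈ C, f Z ≤ f W := fun W hW => hfZ ▸ hmin0 W hW
  have m2 : ∀ W ∈ C, f W ≤ f Z → Z.card ≤ W.card := fun W hW h =>
    hmin W (Finset.mem_filter.2 ⟨hW, le_antisymm (hfZ ▸ h) (hmin0 W hW)⟩)
  obtain ⟨hZne, hZH, h0, hh0, hh0Z⟩ := (memC Z).1 hZC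
  have sumH : ∀ W : Finset G, (∀ x ∈ W, x ∈ H) → W + Y ⊆ Hf := by
    intro W hW z hz
    obtain ⟨a, ha, b, hb, rfl⟩ := Finset.mem_add.1 hz
    exact (memHf _).2 (H.add_mem (hW a ha) (hYH b hb))
  -- the dual fragment
  have dual : (Z.card : ℤ) + (Z + Y).card ≤ Hf.card := by
    set Z' : Finset G := Hf \ (Z + Y) with hZ'
    have c1 : (Z'.card : ℤ) = Hf.card - (Z + Y).card := by
      have := Finset.card_sdiff_add_card_eq_card (sumH Z hZH)
      rw [hZ']; omega
    have disj : ∀ z ∈ Z, -z ∉ -Z' + Y := by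
      intro z hz hmem
      obtain ⟨a, ha, b, hb, hab⟩ := Finset.mem_add.1 hmem
      rw [Finset.mem_neg'] at ha
      have := (Finset.mem_sdiff.1 ha).2
      apply this
      have : -a = z + b := by rw [← neg_neg z, ← hab]; abel
      rw [this]; exact Finset.add_mem_add hz hb
    have nH : ∀ x ∈ -Z', x ∈ H := by
      intro x hx
      rw [Finset.mem_neg'] at hx
      have := (memHf _).1 (Finset.mem_sdiff.1 hx).1
      simpa using this
    have c2 : (-Z' + Y).card + Z.card ≤ Hf.card := by
      rw [← Finset.card_neg Z, ← Finset.card_union_of_disjoint]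
      · apply Finset.card_le_card
        apply Finset.union_subset (sumH _ nH)
        intro x hx
        rw [Finset.mem_neg'] at hx
        have := hZH _ hx
        rw [memHf]; simpa using this
      · rw [Finset.disjoint_left]
        intro x hx hx'
        rw [Finset.mem_neg'] at hx'
        apply disj _ hx'
        simpa using hx
    have inC : -Z' ∈ C := by
      rw [memC]
      refine ⟨?_, nH, ?_⟩
      · exact ⟨-h0, Finset.neg_mem_neg (Finset.mem_sdiff.2 ⟨(memHf _).2 hh0, hh0Z⟩)⟩
      · obtain ⟨z, hz⟩ := hZne
        exact ⟨-z, H.neg_mem (hZH z hz), disj z hz⟩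
    have := m2 _ inC (by
      simp only [hf, Finset.card_neg]
      have : ((-Z' + Y).card : ℤ) + Z.card ≤ Hf.card := by exact_mod_cast c2
      linarith)
    rw [Finset.card_neg] at this
    have : (Z.card : ℤ) ≤ Z'.card := by exact_mod_cast this
    linarith
  -- translates
  have trans : ∀ g ∈ H, (Z ∩ (g +ᵥ Z)).Nonempty → g +ᵥ Z = Z := by
    intro g hg hI
    by_contra hne'
    set W := g +ᵥ Z with hW
    have hWc : W.card = Z.card := by simp [hW]
    have hWY : W + Y = g +ᵥ (Z + Y) := by rw [hW, vadd_add_assoc]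
    have hWYc : (W + Y).card = (Z + Y).card := by rw [hWY]; simp
    have hlt : (Z ∩ W).card < Z.card := by
      apply Finset.card_lt_card
      refine ⟨Finset.inter_subset_left, fun h => hne' ?_⟩
      have : Z ⊆ W := fun x hx => (Finset.mem_inter.1 (h hx)).2
      exact (Finset.eq_of_subset_of_card_le this hWc.le).symm
    have hIC : Z ∩ W ∈ C := by
      rw [memC]
      refine ⟨hI, fun x hx => hZH x (Finset.mem_inter.1 hx).1, h0, hh0, fun h => hh0Z ?_⟩
      exact Finset.add_subset_add_right Finset.inter_subset_left h
    have hfI : f Z < f (Z ∩ W) := by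
      by_contra hcon
      exact absurd (m2 _ hIC (not_lt.1 hcon)) (not_le.2 hlt)
    have hWH : ∀ x ∈ W, x ∈ H := by
      intro x hx
      obtain ⟨z, hz, rfl⟩ := Finset.mem_vadd_finset.1 hx
      exact H.add_mem hg (hZH z hz)
    have hUH : ∀ x ∈ Z ∪ W, x ∈ H := by
      intro x hx
      rcases Finset.mem_union.1 hx with h | h
      exacts [hZH x h, hWH x h]
    have hsub : ((Z ∩ W) + Y).card + ((Z ∪ W) + Y).card ≤ (Z + Y).card + (W + Y).card := by
      rw [Finset.union_add, ← Finset.card_inter_add_card_union (Z + Y) (W + Y)]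
      have : (Z ∩ W) + Y ⊆ (Z + Y) ∩ (W + Y) := Finset.inter_add_subset
      have := Finset.card_le_card this
      omega
    have hcard := Finset.card_inter_add_card_union Z W
    have hfU : f (Z ∪ W) < f Z := by
      simp only [hf] at hfI ⊢
      omega
    have hUnot : Z ∪ W ∉ C := fun h => absurd (m1 _ h) (not_le.2 hfU)
    have hfull : Hf ⊆ (Z ∪ W) + Y := by
      intro h hh
      by_contra hcon
      apply hUnot
      rw [memC]
      exact ⟨hZne.mono Finset.subset_union_left, hUH, h, (memHf _).1 hh, hcon⟩
    have := Finset.card_le_card hfull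
    have hI' := Finset.card_pos.2 hI
    simp only [hf] at hfU
    omega
  -- the atom is a coset of a subgroup
  obtain ⟨z0, hz0⟩ := hZne
  have hper : ∀ a ∈ Z, ∀ b ∈ Z, (a - b) +ᵥ Z = Z := by
    intro a ha b hb
    apply trans _ (H.sub_mem (hZH a ha) (hZH b hb))
    refine ⟨a, Finset.mem_inter.2 ⟨ha, Finset.mem_vadd_finset.2 ⟨b, hb, ?_⟩⟩⟩
    simp
  have key : 2 * Z.card ≤ (Z + Y).card := by
    -- some element y of Y moves Z off itself
    have hex : ∃ y ∈ Y, y +ᵥ Z ≠ Z := by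
      by_contra hcon
      push Not at hcon
      have hst : H ≤ AddAction.stabilizer G Z := by
        rw [hH, AddSubgroup.closure_le]
        intro y hy
        exact hcon y hy
      apply hh0Z
      have : (h0 - z0) +ᵥ Z = Z := hst (H.sub_mem hh0 (hZH z0 hz0))
      have h3 : h0 ∈ Z := by
        rw [← this]
        exact Finset.mem_vadd_finset.2 ⟨z0, hz0, by simp⟩
      simpa using Finset.add_mem_add h3 hY0
    obtain ⟨y, hy, hyZ⟩ := hex
    have hd : Disjoint Z (y +ᵥ Z) := by
      rw [Finset.disjoint_iff_inter_eq_empty]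
      by_contra hcon
      exact hyZ (trans y (hYH y hy) (Finset.nonempty_iff_ne_empty.2 hcon))
    have : (Z ∪ (y +ᵥ Z)).card ≤ (Z + Y).card := by
      apply Finset.card_le_card
      apply Finset.union_subset
      · intro x hx; simpa using Finset.add_mem_add hx hY0
      · intro x hx
        obtain ⟨z, hz, rfl⟩ := Finset.mem_vadd_finset.1 hx
        have : y +ᵥ z = z + y := by rw [vadd_eq_add, add_comm]
        rw [this]; exact Finset.add_mem_add hz hy
    rw [Finset.card_union_of_disjoint hd, Finset.card_vadd_finset] at this
    omega
  have hYc : Y.card ≤ (Z + Y).card := Finset.card_le_card_add_left ⟨z0, hz0⟩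
  have := m1 X hXC
  simp only [hf] at this
  omega

lemma olson {G : Type*} [AddCommGroup G] [Fintype G] [DecidableEq G]
    (X Y : Finset G) (y0 : G) (hy0 : y0 ∈ Y) (H : AddSubgroup G)
    (hH : H = AddSubgroup.closure ((-y0 +ᵥ Y : Finset G) : Set G))
    (hne : ∃ x ∈ X, ∃ h ∈ H, x + y0 + h ∉ X + Y) :
    2 * X.card + Y.card ≤ 2 * (X + Y).card := by
  classical
  obtain ⟨x, hx, h, hh, hnot⟩ := hne
  set Y0 : Finset G := -y0 +ᵥ Y with hY0
  have h0 : (0 : G) ∈ Y0 := Finset.mem_vadd_finset.2 ⟨y0, hy0, by simp⟩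
  have hYH : ∀ y ∈ Y0, y ∈ H := fun y hy => hH ▸ AddSubgroup.subset_closure hy
  set X1 := X.filter (fun z => z - x ∈ H) with hX1
  set X2 := X.filter (fun z => ¬ (z - x ∈ H)) with hX2
  have hcard : X1.card + X2.card = X.card := Finset.card_filter_add_card_filter_not _
  have e1 : (-x +ᵥ X1) + Y0 = (-x - y0) +ᵥ (X1 + Y) := by
    rw [hY0, vadd_add_vadd_comm, ← sub_eq_add_neg]
  have i1 := iso_ineq Y0 h0 H hH (-x +ᵥ X1)
    ⟨0, Finset.mem_vadd_finset.2 ⟨x, by simp [hX1, hx, H.zero_mem], by simp⟩⟩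
    (by
      intro z hz
      obtain ⟨w, hw, rfl⟩ := Finset.mem_vadd_finset.1 hz
      have := (Finset.mem_filter.1 hw).2
      rw [vadd_eq_add, neg_add_eq_sub]; exact this)
    ⟨h, hh, by
      rw [e1]
      intro hmem
      obtain ⟨w, hw, hw'⟩ := Finset.mem_vadd_finset.1 hmem
      apply hnot
      have : x + y0 + h = w := by rw [← hw', vadd_eq_add]; abel
      rw [this]
      exact Finset.add_subset_add_right (Finset.filter_subset _ _) hw⟩
  rw [e1] at i1
  simp only [Finset.card_vadd_finset, hY0] at i1
  have hX2c : X2.card ≤ (X2 + Y).card := Finset.card_le_card_add_right ⟨y0, hy0⟩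
  have hdis : Disjoint (X1 + Y) (X2 + Y) := by
    rw [Finset.disjoint_left]
    intro z hz hz'
    obtain ⟨a, ha, b, hb, rfl⟩ := Finset.mem_add.1 hz
    obtain ⟨a', ha', b', hb', he⟩ := Finset.mem_add.1 hz'
    apply (Finset.mem_filter.1 ha').2
    have k1 := (Finset.mem_filter.1 ha).2
    have k2 := hYH _ (Finset.mem_vadd_finset.2 ⟨b, hb, rfl⟩)
    have k3 := hYH _ (Finset.mem_vadd_finset.2 ⟨b', hb', rfl⟩)
    have : a' - x = (a - x) + ((-y0 +ᵥ b) - (-y0 +ᵥ b')) := by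
      rw [vadd_eq_add, vadd_eq_add, eq_sub_of_add_eq he]; abel
    rw [this]
    exact H.add_mem k1 (H.sub_mem k2 k3)
  have hun : ((X1 + Y) ∪ (X2 + Y)).card ≤ (X + Y).card := by
    apply Finset.card_le_card
    rw [← Finset.union_add]
    exact Finset.add_subset_add_right
      (Finset.union_subset (Finset.filter_subset _ _) (Finset.filter_subset _ _))
  rw [Finset.card_union_of_disjoint hdis] at hun
  omega

/-- `X` lies in a coset of a subgroup of size less than `3/2 |X|`. -/
def SmallSet {G : Type*} [AddCommGroup G] (X : Finset G) : Prop :=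
  ∃ (H : AddSubgroup G) (x : G), 2 * Nat.card H < 3 * X.card ∧ ∀ z ∈ X, z - x ∈ H

lemma two_cosets {G : Type*} [AddCommGroup G] [Fintype G] [DecidableEq G]
    (S T : Finset G) (a b : G) (hd : ∀ s ∈ T, ∀ t ∈ T, a + s ≠ b + t)
    (ha : ∀ t ∈ T, a + t ∈ S) (hb : ∀ t ∈ T, b + t ∈ S) : 2 * T.card ≤ S.card := by
  have hdis : Disjoint (a +ᵥ T) (b +ᵥ T) := by
    rw [Finset.disjoint_left]
    intro z hz hz'
    obtain ⟨s, hs, rfl⟩ := Finset.mem_vadd_finset.1 hz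
    obtain ⟨t, ht, he⟩ := Finset.mem_vadd_finset.1 hz'
    exact hd s hs t ht he.symm
  have : ((a +ᵥ T) ∪ (b +ᵥ T)).card ≤ S.card := by
    apply Finset.card_le_card
    apply Finset.union_subset
    · intro z hz
      obtain ⟨s, hs, rfl⟩ := Finset.mem_vadd_finset.1 hz
      exact ha s hs
    · intro z hz
      obtain ⟨s, hs, rfl⟩ := Finset.mem_vadd_finset.1 hz
      exact hb s hs
  rw [Finset.card_union_of_disjoint hdis] at this
  simp only [Finset.card_vadd_finset] at this
  omega

lemma sum_bound {G : Type*} [AddCommGroup G] [Fintype G] [DecidableEq G]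
    (X Y : Finset G) (hX : X.Nonempty) (hY : Y.Nonempty) (hns : ¬ SmallSet X) :
    2 * X.card + Y.card ≤ 2 * (X + Y).card ∨ 3 * X.card ≤ 2 * (X + Y).card ∨
      2 * Y.card ≤ (X + Y).card := by
  classical
  obtain ⟨y0, hy0⟩ := hY
  set H : AddSubgroup G := AddSubgroup.closure ((-y0 +ᵥ Y : Finset G) : Set G) with hH
  by_cases hne : ∃ x ∈ X, ∃ h ∈ H, x + y0 + h ∉ X + Y
  · exact Or.inl (olson X Y y0 hy0 H hH hne)
  right
  push Not at hne
  set Hf : Finset G := Finset.univ.filter (· ∈ H) with hHf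
  have hHc : Nat.card H = Hf.card := by
    rw [hHf, Nat.card_eq_fintype_card, Fintype.card_subtype]
  obtain ⟨x, hx⟩ := hX
  by_cases hc : ∀ z ∈ X, z - x ∈ H
  · left
    have h1 : 3 * X.card ≤ 2 * Nat.card H := by
      by_contra hcon
      exact hns ⟨H, x, not_le.1 hcon, hc⟩
    have h2 : ((x + y0) +ᵥ Hf).card ≤ (X + Y).card := by
      apply Finset.card_le_card
      intro z hz
      obtain ⟨s, hs, rfl⟩ := Finset.mem_vadd_finset.1 hz
      exact hne x hx s (by simpa [hHf] using hs)
    rw [Finset.card_vadd_finset] at h2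
    omega
  · right
    push Not at hc
    obtain ⟨x', hx', hxx⟩ := hc
    have h1 : 2 * Hf.card ≤ (X + Y).card := by
      apply two_cosets _ _ (x + y0) (x' + y0)
      · intro s hs t ht he
        apply hxx
        have : x' - x = s - t := by
          have : x + s = x' + t := by
            have := he
            rw [add_right_comm, add_right_comm x'] at this
            exact add_right_cancel this
          rw [sub_eq_sub_iff_add_eq_add, ← this, add_comm]
        rw [this]
        exact H.sub_mem (by simpa [hHf] using hs) (by simpa [hHf] using ht)
      · intro t ht; exact hne x hx t (by simpa [hHf] using ht)
      · intro t ht; exact hne x' hx' t (by simpa [hHf] using ht)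
    have h2 : (-y0 +ᵥ Y).card ≤ Hf.card := by
      apply Finset.card_le_card
      intro z hz
      simp only [hHf, Finset.mem_filter, Finset.mem_univ, true_and]
      exact AddSubgroup.subset_closure hz
    rw [Finset.card_vadd_finset] at h2
    omega

lemma small_bound {G : Type*} [AddCommGroup G] [Fintype G] [DecidableEq G]
    (X Y : Finset G) (hX : X.Nonempty) (hYX : Y.card ≤ X.card) (hns : ¬ SmallSet X)
    (hs : SmallSet Y) : 2 * Y.card ≤ (X + Y).card := by
  obtain ⟨H, y, hc, hy⟩ := hs
  obtain ⟨x, hx⟩ := hX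
  have : ∃ x' ∈ X, x' - x ∉ H := by
    by_contra hcon
    push Not at hcon
    exact hns ⟨H, x, by omega, hcon⟩
  obtain ⟨x', hx', hxx⟩ := this
  apply two_cosets _ _ x x'
  · intro s hs t ht he
    apply hxx
    have : x' - x = (s - y) - (t - y) := by
      rw [sub_sub_sub_cancel_right, sub_eq_sub_iff_add_eq_add, ← he, add_comm]
    rw [this]
    exact H.sub_mem (hy s hs) (hy t ht)
  · intro t ht; exact Finset.add_mem_add hx ht
  · intro t ht; exact Finset.add_mem_add hx' ht

lemma layer_swap (A : Finset ℤ) (P : ℤ → Prop) [DecidablePred P] (m : ℤ → ℕ) (l u : ℕ) :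
    ∑ t ∈ Finset.Ioc l u, (A.filter (fun x => P x ∧ t ≤ m x)).card =
      ∑ x ∈ A, if P x then min u (m x) - l else 0 := by
  simp only [Finset.card_filter]
  rw [Finset.sum_comm]
  apply Finset.sum_congr rfl
  intro x _
  by_cases hP : P x
  · simp only [hP, true_and, if_true]
    rw [← Finset.card_filter, ← Nat.card_Ioc]
    congr 1
    ext t
    simp only [Finset.mem_filter, Finset.mem_Ioc, le_min_iff]
    tauto
  · simp [hP]

lemma layer_count (A : Finset ℤ) (h0A : (0 : ℤ) ∈ A) (hA : 6 ≤ A.card) (k : ℤ → ℕ) (b : ℕ)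
    (hk0 : k 0 = b) (hkb : ∀ x ∈ A, k x ≤ b) (sm : ℤ → Prop) (hsm : ¬ sm 0) (F : ℤ → ℕ)
    (hF1 : ∀ x ∈ A, ∀ y ∈ A, k x ≤ F (x + y))
    (hF2 : ∀ x ∈ A, ∀ y ∈ A, ¬ sm x → 2 * k x + k y ≤ 2 * F (x + y) ∨
      3 * k x ≤ 2 * F (x + y) ∨ 2 * k y ≤ F (x + y))
    (hF3 : ∀ x ∈ A, sm x → 2 * k x ≤ F x) :
    5 * ∑ x ∈ A, k x ≤ 2 * ∑ c ∈ A + A, F c := by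
  classical
  set N : ℕ → ℕ := fun t => ((A + A).filter (fun c => t ≤ 12 * F c)).card with hN
  have hAs : ∀ x ∈ A, x ∈ A + A := fun x hx => by simpa using Finset.add_mem_add h0A hx
  have htot : ∑ t ∈ Finset.Ioc 0 (24 * b), N t ≤ 12 * ∑ c ∈ A + A, F c := by
    have := layer_swap (A + A) (fun _ => True) (fun c => 12 * F c) 0 (24 * b)
    simp only [true_and, if_true] at this
    rw [hN, this, Finset.mul_sum]
    apply Finset.sum_le_sum
    intro c _
    omega
  have hsplit : ∑ t ∈ Finset.Ioc 0 (24 * b), N t =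
      ∑ t ∈ Finset.Ioc 0 (12 * b), N t + ∑ t ∈ Finset.Ioc (12 * b) (16 * b), N t +
      ∑ t ∈ Finset.Ioc (16 * b) (18 * b), N t + ∑ t ∈ Finset.Ioc (18 * b) (24 * b), N t := by
    rw [Finset.sum_Ioc_consecutive, Finset.sum_Ioc_consecutive, Finset.sum_Ioc_consecutive] <;>
      omega
  -- sumset lower bound
  have hCD : ∀ (t : ℕ) (U V : Finset ℤ), U ⊆ A → V ⊆ A → (0 : ℤ) ∈ U → V.Nonempty →
      (∀ x ∈ U, ∀ y ∈ V, t ≤ 12 * F (x + y)) → U.card + V.card ≤ N t + 1 := by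
    intro t U V hU hV hU0 hVn h
    have h1 := cauchy_davenport_add_of_linearOrder_isCancelAdd (s := U) (t := V) ⟨0, hU0⟩ hVn
    have h2 : (U + V).card ≤ N t := by
      apply Finset.card_le_card
      intro c hc
      obtain ⟨x, hx, y, hy, rfl⟩ := Finset.mem_add.1 hc
      exact Finset.mem_filter.2 ⟨Finset.add_mem_add (hU hx) (hV hy), h x hx y hy⟩
    omega
  have r1 : 12 * b * A.card + ∑ x ∈ A, min (12 * b) (12 * k x) ≤
      ∑ t ∈ Finset.Ioc 0 (12 * b), N t + 12 * b := by
    have e := layer_swap A (fun _ => True) (fun c => 12 * k c) 0 (12 * b)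
    simp only [true_and, if_true, Nat.sub_zero] at e
    rw [← e]
    have : ∑ t ∈ Finset.Ioc 0 (12 * b), (A.card + (A.filter (fun x => t ≤ 12 * k x)).card) ≤
        ∑ t ∈ Finset.Ioc 0 (12 * b), (N t + 1) := by
      apply Finset.sum_le_sum
      intro t ht
      rw [Finset.mem_Ioc] at ht
      rw [add_comm]
      apply hCD
      · exact Finset.filter_subset _ _
      · exact subset_rfl
      · simp [h0A, hk0, ht.2]
      · exact ⟨0, h0A⟩
      · intro x hx y hy
        have hx := Finset.mem_filter.1 hx
        have := hF1 x hx.1 y hy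
        omega
    simp only [Finset.sum_add_distrib, Finset.sum_const, Nat.card_Ioc, smul_eq_mul] at this
    simpa using this
  have r2 : (∑ x ∈ A, (min (16 * b) (24 * k x) - 12 * b)) +
      (∑ x ∈ A, if ¬ sm x then min (16 * b) (16 * k x) - 12 * b else 0) ≤
      ∑ t ∈ Finset.Ioc (12 * b) (16 * b), N t + 4 * b := by
    have e := layer_swap A (fun _ => True) (fun c => 24 * k c) (12 * b) (16 * b)
    have e' := layer_swap A (fun x => ¬ sm x) (fun c => 16 * k c) (12 * b) (16 * b)
    simp only [true_and, if_true] at e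
    rw [← e, ← e', ← Finset.sum_add_distrib]
    have : ∑ t ∈ Finset.Ioc (12 * b) (16 * b), ((A.filter (fun x => t ≤ 24 * k x)).card +
        (A.filter (fun x => ¬ sm x ∧ t ≤ 16 * k x)).card) ≤
        ∑ t ∈ Finset.Ioc (12 * b) (16 * b), (N t + 1) := by
      apply Finset.sum_le_sum
      intro t ht
      rw [Finset.mem_Ioc] at ht
      rw [add_comm]
      apply hCD
      · exact Finset.filter_subset _ _
      · exact Finset.filter_subset _ _
      · simp [h0A, hk0, ht.2, hsm]
      · refine ⟨0, ?_⟩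
        simp only [Finset.mem_filter, h0A, hk0, true_and]; omega
      · intro x hx y hy
        have hx := Finset.mem_filter.1 hx
        have hy := Finset.mem_filter.1 hy
        have := hF2 x hx.1 y hy.1 hx.2.1
        omega
    rw [Finset.sum_add_distrib (g := fun _ => 1)] at this
    simp only [Finset.sum_const, Nat.card_Ioc, smul_eq_mul] at this
    omega
  have r3 : (∑ x ∈ A, (min (18 * b) (12 * b + 6 * k x) - 16 * b)) ≤
      ∑ t ∈ Finset.Ioc (16 * b) (18 * b), N t := by
    have e := layer_swap A (fun _ => True) (fun c => 12 * b + 6 * k c) (16 * b) (18 * b)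
    simp only [true_and, if_true] at e
    rw [← e]
    apply Finset.sum_le_sum
    intro t ht
    rw [Finset.mem_Ioc] at ht
    apply Finset.card_le_card
    intro x hx
    have hx := Finset.mem_filter.1 hx
    refine Finset.mem_filter.2 ⟨hAs x hx.1, ?_⟩
    have := hF2 0 h0A x hx.1 hsm
    rw [zero_add, hk0] at this
    omega
  have r4 : (∑ x ∈ A, if sm x then min (24 * b) (24 * k x) - 18 * b else 0) ≤
      ∑ t ∈ Finset.Ioc (18 * b) (24 * b), N t := by
    have e := layer_swap A (fun x => sm x) (fun c => 24 * k c) (18 * b) (24 * b)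
    rw [← e]
    apply Finset.sum_le_sum
    intro t ht
    apply Finset.card_le_card
    intro x hx
    have hx := Finset.mem_filter.1 hx
    refine Finset.mem_filter.2 ⟨hAs x hx.1, ?_⟩
    have := hF3 x hx.1 hx.2.1
    omega
  set T : ℤ → ℕ := fun x => 12 * b + min (12 * b) (12 * k x) +
    ((min (16 * b) (24 * k x) - 12 * b) +
      (if ¬ sm x then min (16 * b) (16 * k x) - 12 * b else 0)) +
    (min (18 * b) (12 * b + 6 * k x) - 16 * b) +
    (if sm x then min (24 * b) (24 * k x) - 18 * b else 0) with hT
  have hTsum : ∑ x ∈ A, T x ≤ 12 * ∑ c ∈ A + A, F c + 16 * b := by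
    simp only [hT, Finset.sum_add_distrib, Finset.sum_const, smul_eq_mul]
    rw [mul_comm A.card]
    omega
  have hT0 : T 0 = 34 * b := by
    simp only [hT, hsm, hk0, not_false_eq_true, if_true, if_false]
    omega
  have hTx : ∀ x ∈ A.erase 0, 30 * k x + 3 * b ≤ T x := by
    intro x hx
    have := hkb x (Finset.mem_of_mem_erase hx)
    by_cases h : sm x
    · simp only [hT, h, not_true_eq_false, if_true, if_false]
      omega
    · simp only [hT, h, not_false_eq_true, if_true, if_false]
      omega
  have hs := Finset.sum_le_sum hTx
  rw [Finset.sum_add_distrib, Finset.sum_const, Finset.card_erase_of_mem h0A, smul_eq_mul,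
    ← Finset.mul_sum] at hs
  have h1 := Finset.add_sum_erase A T h0A
  have h2 := Finset.add_sum_erase A k h0A
  have h3 : 5 * (3 * b) ≤ (A.card - 1) * (3 * b) := Nat.mul_le_mul_right _ (by omega)
  omega

theorem B1_in_coset_of_small_doubling (s d : ℕ) (hs : 6 ≤ s) (hd : 0 < d)
    (a : ℕ → ℤ) (ha0 : a 0 = 0)
    (hinj : ∀ i < s, ∀ j < s, a i = a j → i = j)
    (hgcd : (Finset.range s).gcd a = 1)
    (B : ℕ → Finset (ZMod d)) (hBne : ∀ i < s, (B i).Nonempty) (h0B : (0 : ZMod d) ∈ B 0)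
    (hord : ∀ i < s, (B i).card ≤ (B 0).card)
    (Btil : Finset (ℤ × ZMod d))
    (hBtil : Btil = (Finset.range s).biUnion (fun i => {a i} ×ˢ B i))
    (hdbl : 2 * (Btil + Btil).card < 5 * Btil.card) :
    ∃ (H : AddSubgroup (ZMod d)) (x : ZMod d),
      2 * Nat.card H < 3 * (B 0).card ∧ ∀ z ∈ B 0, z - x ∈ H := by
  classical
  have : NeZero d := ⟨hd.ne'⟩
  by_contra hcon
  have hns : ¬ SmallSet (B 0) := hcon
  set A : Finset ℤ := (Finset.range s).image a with hA
  set X : ℤ → Finset (ZMod d) := fun x => Finset.univ.filter (fun z => (x, z) ∈ Btil) with hX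
  have memB : ∀ x z, (x, z) ∈ Btil ↔ ∃ i < s, a i = x ∧ z ∈ B i := by
    intro x z
    simp only [hBtil, Finset.mem_biUnion, Finset.mem_range, Finset.mem_product,
      Finset.mem_singleton]
    constructor
    · rintro ⟨i, hi, h, hz⟩; exact ⟨i, hi, h.symm, hz⟩
    · rintro ⟨i, hi, h, hz⟩; exact ⟨i, hi, h.symm, hz⟩
  have hXa : ∀ i < s, X (a i) = B i := by
    intro i hi
    ext z
    simp only [hX, Finset.mem_filter, Finset.mem_univ, true_and, memB]
    constructor
    · rintro ⟨j, hj, h, hz⟩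
      rwa [← hinj j hj i hi h]
    · intro hz; exact ⟨i, hi, rfl, hz⟩
  have hX0 : X 0 = B 0 := by rw [← ha0]; exact hXa 0 (by omega)
  have hAi : ∀ x ∈ A, ∃ i < s, a i = x := by
    intro x hx
    simpa [hA] using hx
  have hXne : ∀ x ∈ A, (X x).Nonempty := by
    intro x hx
    obtain ⟨i, hi, rfl⟩ := hAi x hx
    rw [hXa i hi]; exact hBne i hi
  have hXle : ∀ x ∈ A, (X x).card ≤ (B 0).card := by
    intro x hx
    obtain ⟨i, hi, rfl⟩ := hAi x hx
    rw [hXa i hi]; exact hord i hi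
  have h0A : (0 : ℤ) ∈ A := Finset.mem_image.2 ⟨0, by simp; omega, ha0⟩
  have hAc : A.card = s := by
    rw [hA, Finset.card_image_of_injOn, Finset.card_range]
    intro i hi j hj h
    exact hinj i (by simpa using hi) j (by simpa using hj) h
  have hfst : ∀ p ∈ Btil, p.1 ∈ A := by
    rintro ⟨x, z⟩ hp
    obtain ⟨i, hi, rfl, _⟩ := (memB x z).1 hp
    exact Finset.mem_image.2 ⟨i, by simpa using hi, rfl⟩
  set F : ℤ → ℕ := fun c => ((Btil + Btil).filter (fun p => p.1 = c)).card with hF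
  have hsum1 : ∑ x ∈ A, (X x).card = Btil.card := by
    rw [Finset.card_eq_sum_card_fiberwise (f := Prod.fst) (t := A) hfst]
    apply Finset.sum_congr rfl
    intro x _
    apply Finset.card_bij (fun z _ => (x, z))
    · intro z hz
      simpa [hX] using hz
    · intro z _ w _ h
      exact (Prod.ext_iff.1 h).2
    · rintro ⟨y, z⟩ hp
      rw [Finset.mem_filter] at hp
      obtain ⟨hp, rfl⟩ := hp
      exact ⟨z, by simpa [hX] using hp, rfl⟩
  have hsum2 : ∑ c ∈ A + A, F c = (Btil + Btil).card := by
    rw [Finset.card_eq_sum_card_fiberwise (f := Prod.fst) (s := Btil + Btil) (t := A + A)]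
    intro p hp
    obtain ⟨u, hu, v, hv, rfl⟩ := Finset.mem_add.1 hp
    exact Finset.add_mem_add (hfst u hu) (hfst v hv)
  have hFge : ∀ x y, (X x + X y).card ≤ F (x + y) := by
    intro x y
    apply Finset.card_le_card_of_injOn (fun z => (x + y, z))
    · intro z hz
      obtain ⟨u, hu, v, hv, rfl⟩ := Finset.mem_add.1 hz
      simp only [hX, Finset.mem_filter, Finset.mem_univ, true_and] at hu hv
      have := Finset.add_mem_add hu hv
      exact Finset.mem_coe.2 (Finset.mem_filter.2 ⟨this, rfl⟩)
    · intro z _ w _ h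
      exact (Prod.ext_iff.1 h).2
  have main := layer_count A h0A (by omega) (fun x => (X x).card) (B 0).card
    (by rw [hX0]) hXle (fun x => SmallSet (X x)) (by rw [hX0]; exact hns) F
    (by
      intro x hx y hy
      exact (Finset.card_le_card_add_right (hXne y hy)).trans (hFge x y))
    (by
      intro x hx y hy hn
      have h1 := hFge x y
      rcases sum_bound (X x) (X y) (hXne x hx) (hXne y hy) hn with h | h | h
      · left; omega
      · right; left; omega
      · right; right; omega)
    (by
      intro x hx hsx
      have h1 := hFge 0 x
      rw [zero_add] at h1
      have h2 := small_bound (X 0) (X x) (hXne 0 h0A) (by rw [hX0]; exact hXle x hx)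
        (by rw [hX0]; exact hns) hsx
      omega)
  rw [hsum1, hsum2] at main
  omega
end

section
/- Let s ≥ 6 and d be positive integers, a_1 = 0, a_2, ..., a_s integers with gcd of the nonzero a_i equal to 1, and B_1, ..., B_s nonempty subsets of Z/dZ with 0 ∈ B_1 and |B_1| ≥ |B_i| for all i. Let B~ = ∪_{i=1}^s ({a_i} × B_i). If |B~ + B~| < 2.5 |B~|, then there exists a subgroup H of Z/dZ with |H| < (3/2)|B_1| such that every B_i is contained in a single coset of H. -/
open Pointwise

lemma olson_aux {G : Type*} [AddCommGroup G] [Fintype G] [DecidableEq G] (Y : Finset G)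
    (h0 : (0 : G) ∈ Y) (hgen : ∀ H : AddSubgroup G, (∀ y ∈ Y, y ∈ H) → H = ⊤)
    (X : Finset G) (hX : X.Nonempty) (hXY : X + Y ≠ Finset.univ) :
    2 * X.card + Y.card ≤ 2 * (X + Y).card := by
  classical
  have hsub : ∀ Z : Finset G, Z ⊆ Z + Y := fun Z z hz => by
    simpa using Finset.add_mem_add hz h0
  have hle : ∀ Z : Finset G, Z.card ≤ (Z + Y).card := fun Z => Finset.card_le_card (hsub Z)
  let F : Finset (Finset G) := Finset.univ.filter (fun Z => Z.Nonempty ∧ Z + Y ≠ Finset.univ)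
  have hF : ∀ Z, Z ∈ F ↔ (Z.Nonempty ∧ Z + Y ≠ Finset.univ) := fun Z => by simp [F]
  obtain ⟨A1, hA1, hmin1⟩ := F.exists_min_image (fun Z => (Z + Y).card - Z.card)
    ⟨X, (hF X).2 ⟨hX, hXY⟩⟩
  let F2 := F.filter (fun Z => (Z + Y).card - Z.card = (A1 + Y).card - A1.card)
  obtain ⟨A2, hA2, hmin2⟩ := F2.exists_min_image (fun Z => Z.card)
    ⟨A1, by simp [F2, hA1]⟩
  have hA2F : A2 ∈ F := (Finset.mem_filter.1 hA2).1
  have hA2k := (Finset.mem_filter.1 hA2).2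
  obtain ⟨a, ha⟩ := ((hF _).1 hA2F).1
  obtain ⟨A, hAdef⟩ : ∃ A, A = {-a} + A2 := ⟨_, rfl⟩
  have hcardA : A.card = A2.card := by rw [hAdef, Finset.card_singleton_add]
  have hcardAY : (A + Y).card = (A2 + Y).card := by
    rw [hAdef, add_assoc, Finset.card_singleton_add]
  have h0A : (0 : G) ∈ A := by
    rw [hAdef]
    simpa using Finset.add_mem_add (Finset.mem_singleton_self (-a)) ha
  have hne : ∀ Z : Finset G, Z ≠ Finset.univ ↔ Z.card < Fintype.card G := fun Z => by
    rw [Finset.card_lt_iff_ne_univ]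
  -- properties of the atom
  have hAF : A.Nonempty ∧ (A + Y).card < Fintype.card G := by
    refine ⟨⟨0, h0A⟩, ?_⟩
    rw [hcardAY]
    exact (hne _).1 ((hF _).1 hA2F).2
  have hk : ∀ Z : Finset G, Z.Nonempty → (Z + Y).card < Fintype.card G →
      (A + Y).card + Z.card ≤ (Z + Y).card + A.card := fun Z hZ hZ' => by
    have := hmin1 Z ((hF Z).2 ⟨hZ, (hne _).2 hZ'⟩)
    have h1 := hle Z
    have h2 := hle A
    omega
  have hatom : ∀ Z : Finset G, Z.Nonempty → (Z + Y).card < Fintype.card G →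
      (Z + Y).card + A.card ≤ (A + Y).card + Z.card → A.card ≤ Z.card := fun Z hZ hZ' hZ'' => by
    have h1 := hle Z
    have h2 := hle A
    have h3 := hk Z hZ hZ'
    rw [hcardA]
    refine hmin2 Z (Finset.mem_filter.2 ⟨(hF Z).2 ⟨hZ, (hne _).2 hZ'⟩, ?_⟩)
    omega
  -- dual
  have hdual : A.card + (A + Y).card ≤ Fintype.card G := by
    let D : Finset G := -(A + Y)ᶜ
    have hDc : D.card = Fintype.card G - (A + Y).card := by
      simp [D, Finset.card_compl]
    have hDs : D + Y ⊆ -(Aᶜ) := by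
      intro z hz
      obtain ⟨u, hu, y, hy, rfl⟩ := Finset.mem_add.1 hz
      simp only [D, Finset.mem_neg', Finset.mem_compl] at hu ⊢
      intro h
      apply hu
      have := Finset.add_mem_add h hy
      simpa using this
    have hDY := Finset.card_le_card hDs
    rw [Finset.card_neg, Finset.card_compl] at hDY
    have hA0 : 0 < A.card := hAF.1.card_pos
    have hAle : A.card ≤ Fintype.card G := Finset.card_le_univ _
    have h2 := hle A
    have hDne : D.Nonempty := by
      rw [← Finset.card_pos]; omega
    have := hatom D hDne (by omega) (by omega)
    omega
  have htrans : ∀ g ∈ A, {g} + A = A := by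
    intro g hg
    have hIne : (A ∩ ({g} + A)).Nonempty := ⟨g, by
      refine Finset.mem_inter.2 ⟨hg, ?_⟩
      simpa using Finset.add_mem_add (Finset.mem_singleton_self g) h0A⟩
    have e1 := Finset.card_inter_add_card_union A ({g} + A)
    have e2 := Finset.card_inter_add_card_union (A + Y) (({g} + A) + Y)
    have e3 : ((A ∩ ({g} + A)) + Y).card ≤ ((A + Y) ∩ (({g} + A) + Y)).card :=
      Finset.card_le_card Finset.inter_add_subset
    rw [← Finset.union_add] at e2
    have e4 : ({g} + A).card = A.card := Finset.card_singleton_add _ _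
    have e5 : ({g} + A + Y).card = (A + Y).card := by rw [add_assoc, Finset.card_singleton_add]
    have e6 : ((A ∩ ({g} + A)) + Y).card ≤ (A + Y).card :=
      Finset.card_le_card (Finset.add_subset_add_right Finset.inter_subset_left)
    have e7 := hk _ hIne (by have := hAF.2; omega)
    have hIpos := hIne.card_pos
    have hUne : (A ∪ ({g} + A)).Nonempty := ⟨0, Finset.mem_union_left _ h0A⟩
    have e8 := hk _ hUne (by omega)
    have e9 := hatom _ hIne (by have := hAF.2; omega) (by omega)
    have e10 : A ∩ ({g} + A) = A := Finset.eq_of_subset_of_card_le Finset.inter_subset_left e9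
    have e11 : A ∩ ({g} + A) = {g} + A :=
      Finset.eq_of_subset_of_card_le Finset.inter_subset_right (by omega)
    rw [← e11, e10]
  have hadd : ∀ x ∈ A, ∀ y ∈ A, x + y ∈ A := fun x hx y hy => by
    have := Finset.add_mem_add (Finset.mem_singleton_self x) hy
    rwa [htrans x hx] at this
  have hneg : ∀ x ∈ A, -x ∈ A := fun x hx => by
    have h := h0A
    rw [← htrans x hx] at h
    obtain ⟨u, hu, v, hv, huv⟩ := Finset.mem_add.1 h
    rw [Finset.mem_singleton] at hu
    subst hu
    have : -u = v := by rw [neg_eq_iff_add_eq_zero]; exact huv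
    rwa [this]
  let H : AddSubgroup G :=
    { carrier := A
      add_mem' := fun {x y} hx hy => hadd x hx y hy
      zero_mem' := h0A
      neg_mem' := fun {x} hx => hneg x hx }
  have hmemH : ∀ x, x ∈ H ↔ x ∈ A := fun x => Iff.rfl
  have hex : ∃ y ∈ Y, y ∉ A := by
    by_contra hcon
    push Not at hcon
    have := hgen H (fun y hy => (hmemH y).2 (hcon y hy))
    have hAu : A = Finset.univ := by
      ext x
      simp [← hmemH, this]
    have h2 := hle A
    have := hAF.2
    rw [hAu] at h2
    rw [Finset.card_univ, ← hAu] at h2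
    omega
  obtain ⟨y, hyY, hyA⟩ := hex
  have hR : ((A + Y) \ A).card + A.card = (A + Y).card :=
    Finset.card_sdiff_add_card_eq_card (hsub A)
  have hR1 : A.card ≤ ((A + Y) \ A).card := by
    rw [← Finset.card_add_singleton A y]
    apply Finset.card_le_card
    intro z hz
    obtain ⟨u, hu, v, hv, rfl⟩ := Finset.mem_add.1 hz
    rw [Finset.mem_singleton] at hv
    subst hv
    refine Finset.mem_sdiff.2 ⟨Finset.add_mem_add hu hyY, fun h => hyA ?_⟩
    have := hadd _ (hneg _ hu) _ h
    simpa using this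
  have hR2 : (Y \ A).card ≤ ((A + Y) \ A).card := by
    apply Finset.card_le_card
    apply Finset.sdiff_subset_sdiff _ (le_refl _)
    intro z hz
    simpa using Finset.add_mem_add h0A hz
  have hR3 : (Y \ A).card + (Y ∩ A).card = Y.card := Finset.card_sdiff_add_card_inter Y A
  have hR4 : (Y ∩ A).card ≤ A.card := Finset.card_le_card Finset.inter_subset_right
  have := hk X hX ((hne _).1 hXY)
  omega

lemma key_pair {G : Type*} [AddCommGroup G] [Finite G] [DecidableEq G] (X Y : Finset G)
    (hX : X.Nonempty) (hY : Y.Nonempty) :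
    2 * X.card + Y.card ≤ 2 * (X + Y).card ∨ 2 * Y.card ≤ (X + Y).card ∨
    ∃ H : AddSubgroup G, (X + Y).card = Nat.card H ∧ (∀ x ∈ X, ∀ x' ∈ X, x - x' ∈ H) ∧
      (∀ x ∈ Y, ∀ x' ∈ Y, x - x' ∈ H) := by
  classical
  have := Fintype.ofFinite G
  obtain ⟨y0, hy0⟩ := hY
  let H : AddSubgroup G := AddSubgroup.closure ((fun y => y - y0) '' (Y : Set G))
  have hYH : ∀ y ∈ Y, y - y0 ∈ H := fun y hy =>
    AddSubgroup.subset_closure ⟨y, hy, rfl⟩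
  have hYH' : ∀ x ∈ Y, ∀ x' ∈ Y, x - x' ∈ H := fun x hx x' hx' => by
    have := H.sub_mem (hYH x hx) (hYH x' hx')
    simpa using this
  let Y' : Finset H := Finset.univ.filter (fun h => (h : G) + y0 ∈ Y)
  have hY'c : Y'.card = Y.card := by
    refine Finset.card_bij (fun h _ => (h : G) + y0) (fun h hh => (Finset.mem_filter.1 hh).2)
      (fun h _ h' _ e => Subtype.ext (add_right_cancel e)) (fun y hy => ⟨⟨y - y0, hYH y hy⟩, ?_, ?_⟩)
    · simp [Y', hy]
    · simp
  have h0' : (0 : H) ∈ Y' := by simp [Y', hy0]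
  have hgen : ∀ K : AddSubgroup H, (∀ y ∈ Y', y ∈ K) → K = ⊤ := by
    intro K hK
    have : H ≤ K.map H.subtype := by
      refine (AddSubgroup.closure_le _).2 ?_
      rintro _ ⟨y, hy, rfl⟩
      refine ⟨⟨y - y0, hYH y hy⟩, hK _ ?_, rfl⟩
      have hy' : y ∈ Y := hy
      simp [Y', hy']
    rw [eq_top_iff]
    intro h _
    obtain ⟨k, hk, e⟩ := this h.2
    have : k = h := Subtype.ext e
    exact this ▸ hk
  let Xg : G → Finset H := fun g => Finset.univ.filter (fun h => (h : G) + g ∈ X)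
  by_cases hper : ∀ g ∈ X, Xg g + Y' = Finset.univ
  · right
    -- X + Y is H-periodic
    have hin : ∀ g ∈ X, ∀ h ∈ H, h + (g + y0) ∈ X + Y := by
      intro g hg h hh
      have : (⟨h, hh⟩ : H) ∈ Xg g + Y' := by rw [hper g hg]; simp
      obtain ⟨u, hu, v, hv, e⟩ := Finset.mem_add.1 this
      have e' : (u : G) + v = h := congrArg Subtype.val e
      have hu' := (Finset.mem_filter.1 hu).2
      have hv' := (Finset.mem_filter.1 hv).2
      have := Finset.add_mem_add hu' hv'
      rw [← e']
      convert this using 1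
      abel
    let Hf : Finset G := Finset.univ.filter (fun g => g ∈ H)
    have hHf : Hf.card = Nat.card H := by
      rw [Nat.card_eq_fintype_card, Fintype.card_subtype]
    have hYle : Y.card ≤ Hf.card := by
      rw [← hY'c, hHf, Nat.card_eq_fintype_card]
      exact Finset.card_le_univ _
    by_cases hsame : ∀ x ∈ X, ∀ x' ∈ X, x - x' ∈ H
    · right
      refine ⟨H, ?_, hsame, hYH'⟩
      obtain ⟨x0, hx0⟩ := hX
      rw [← hHf, ← Finset.card_add_singleton Hf (x0 + y0)]
      congr 1
      apply Finset.Subset.antisymm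
      · intro z hz
        obtain ⟨x, hx, y, hy, rfl⟩ := Finset.mem_add.1 hz
        refine Finset.mem_add.2 ⟨(x - x0) + (y - y0), ?_, _, Finset.mem_singleton_self _, by abel⟩
        simp only [Hf, Finset.mem_filter, Finset.mem_univ, true_and]
        exact H.add_mem (hsame x hx x0 hx0) (hYH y hy)
      · intro z hz
        obtain ⟨h, hh, w, hw, rfl⟩ := Finset.mem_add.1 hz
        rw [Finset.mem_singleton] at hw
        subst hw
        exact hin x0 hx0 h (Finset.mem_filter.1 hh).2
    · left
      push Not at hsame
      obtain ⟨x, hx, x', hx', hxx⟩ := hsame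
      have hdisj : Disjoint (Hf + {x + y0}) (Hf + {x' + y0}) := by
        rw [Finset.disjoint_left]
        intro z hz hz'
        obtain ⟨h, hh, w, hw, rfl⟩ := Finset.mem_add.1 hz
        obtain ⟨h', hh', w', hw', e⟩ := Finset.mem_add.1 hz'
        rw [Finset.mem_singleton] at hw hw'
        subst hw hw'
        apply hxx
        have := H.sub_mem (Finset.mem_filter.1 hh').2 (Finset.mem_filter.1 hh).2
        have e2 : x - x' = h' - h := by
          have : h' + x' = h + x := by
            have := congrArg (fun t => t - y0) e
            simpa [← add_assoc] using this
          rw [sub_eq_sub_iff_add_eq_add, add_comm, ← this]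
        rwa [e2]
      have hsub : (Hf + {x + y0}) ∪ (Hf + {x' + y0}) ⊆ X + Y := by
        intro z hz
        rcases Finset.mem_union.1 hz with hz | hz
        all_goals
          obtain ⟨h, hh, w, hw, rfl⟩ := Finset.mem_add.1 hz
          rw [Finset.mem_singleton] at hw
          subst hw
          exact hin _ (by assumption) h (Finset.mem_filter.1 hh).2
      have := Finset.card_le_card hsub
      rw [Finset.card_union_of_disjoint hdisj, Finset.card_add_singleton,
        Finset.card_add_singleton] at this
      omega
  · left
    push Not at hper
    obtain ⟨g, hg, hgu⟩ := hper
    have hXne : (Xg g).Nonempty := ⟨0, by simp [Xg, hg]⟩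
    have h1 := olson_aux Y' h0' hgen (Xg g) hXne hgu
    let X1 := X.filter (fun x => x - g ∈ H)
    let X2 := X.filter (fun x => x - g ∉ H)
    have hX12 : X1.card + X2.card = X.card := Finset.card_filter_add_card_filter_not _
    have hX1 : (Xg g).card = X1.card := by
      refine Finset.card_bij (fun h _ => (h : G) + g) (fun h hh => ?_)
        (fun h _ h' _ e => Subtype.ext (add_right_cancel e)) (fun x hx => ⟨⟨x - g, (Finset.mem_filter.1 hx).2⟩, ?_, ?_⟩)
      · refine Finset.mem_filter.2 ⟨(Finset.mem_filter.1 hh).2, ?_⟩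
        simp
      · have := (Finset.mem_filter.1 hx).1
        simp [Xg, this]
      · simp
    let P1 := (Xg g + Y').image (fun h : H => (h : G) + (g + y0))
    have hP1 : P1.card = (Xg g + Y').card :=
      Finset.card_image_of_injective _ (fun a b e => Subtype.ext (add_right_cancel e))
    have hP2 : X2.card = (X2 + {y0}).card := (Finset.card_add_singleton _ _).symm
    have hdisj : Disjoint P1 (X2 + {y0}) := by
      rw [Finset.disjoint_left]
      intro z hz hz'
      obtain ⟨h, hh, rfl⟩ := Finset.mem_image.1 hz
      obtain ⟨x, hx, w, hw, e⟩ := Finset.mem_add.1 hz'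
      rw [Finset.mem_singleton] at hw
      subst hw
      apply (Finset.mem_filter.1 hx).2
      have : x - g = h := by
        have := congrArg (fun t => t - w - g) e
        simp only [add_sub_cancel_right] at this
        rw [this]; abel
      rw [this]; exact h.2
    have hsub : P1 ∪ (X2 + {y0}) ⊆ X + Y := by
      apply Finset.union_subset
      · intro z hz
        obtain ⟨h, hh, rfl⟩ := Finset.mem_image.1 hz
        obtain ⟨u, hu, v, hv, rfl⟩ := Finset.mem_add.1 hh
        have := Finset.add_mem_add (Finset.mem_filter.1 hu).2 (Finset.mem_filter.1 hv).2
        convert this using 1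
        push_cast
        abel
      · exact Finset.add_subset_add (Finset.filter_subset _ _) (by simpa using hy0)
    have := Finset.card_le_card hsub
    rw [Finset.card_union_of_disjoint hdisj] at this
    omega

lemma path_exists (Y : Finset ℤ) (hY : Y.Nonempty) :
    ∃ u : ℤ → ℤ, (∀ x, u x ∈ Y) ∧ (∀ x, x ≠ 0 → x + u x ∉ Y) ∧
      (∀ x x', x ≠ 0 → x' ≠ 0 → x + u x = x' + u x' → x = x') ∧
      (0 ∈ Y → (∃ x ∈ Y, x ≠ 0) → ∃ x ∈ Y, x ≠ 0 ∧ u x = x) := by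
  have hM : ∀ y ∈ Y, y ≤ Y.max' hY := fun y hy => Y.le_max' y hy
  have hm : ∀ y ∈ Y, Y.min' hY ≤ y := fun y hy => Y.min'_le y hy
  have hMY := Y.max'_mem hY
  have hmY := Y.min'_mem hY
  generalize Y.max' hY = M at *
  generalize Y.min' hY = m at *
  have hmM := hM m hmY
  refine ⟨fun x => if 0 < x then M else m, ?_, ?_, ?_, ?_⟩
  · intro x
    dsimp only
    split_ifs <;> assumption
  · intro x hx h
    dsimp only at h
    split_ifs at h with h1
    · have := hM _ h
      omega
    · have := hm _ h
      omega
  · intro x x' hx hx' h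
    dsimp only at h
    split_ifs at h <;> omega
  · rintro h0 ⟨x, hx, hx0⟩
    by_cases hx1 : 0 < x
    · have := hM x hx
      refine ⟨M, hMY, by omega, ?_⟩
      dsimp only
      rw [if_pos (by omega)]
    · have := hm x hx
      refine ⟨m, hmY, by omega, ?_⟩
      dsimp only
      rw [if_neg (by omega)]

lemma path_sum (W Y X R : Finset ℤ) (f : ℤ → ℝ) (hf : ∀ c, 0 ≤ f c) (u : ℤ → ℤ)
    (hYW : Y ⊆ W) (hRW : R ⊆ W) (hXW : ∀ x ∈ X, x + u x ∈ W) (hXY : ∀ x ∈ X, x + u x ∉ Y)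
    (hinj : ∀ x ∈ X, ∀ x' ∈ X, x + u x = x' + u x' → x = x')
    (hRY : Disjoint R Y) (hRX : ∀ x ∈ X, x + u x ∉ R) :
    ∑ c ∈ Y, f c + ∑ x ∈ X, f (x + u x) + ∑ c ∈ R, f c ≤ ∑ c ∈ W, f c := by
  classical
  have h1 : ∑ x ∈ X, f (x + u x) = ∑ c ∈ X.image (fun x => x + u x), f c := by
    rw [Finset.sum_image]
    intro x hx x' hx' h
    exact hinj x hx x' hx' h
  have hd : Disjoint Y (X.image (fun x => x + u x)) := by
    rw [Finset.disjoint_right]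
    intro c hc
    obtain ⟨x, hx, rfl⟩ := Finset.mem_image.1 hc
    exact hXY x hx
  have hd2 : Disjoint (Y ∪ X.image (fun x => x + u x)) R := by
    rw [Finset.disjoint_union_left]
    refine ⟨hRY.symm, ?_⟩
    rw [Finset.disjoint_left]
    intro c hc
    obtain ⟨x, hx, rfl⟩ := Finset.mem_image.1 hc
    exact hRX x hx
  rw [h1, ← Finset.sum_union hd, ← Finset.sum_union hd2]
  refine Finset.sum_le_sum_of_subset_of_nonneg ?_ (fun c _ _ => hf c)
  refine Finset.union_subset (Finset.union_subset hYW ?_) hRW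
  intro c hc
  obtain ⟨x, hx, rfl⟩ := Finset.mem_image.1 hc
  exact hXW x hx

lemma base_sum (A : Finset ℤ) (h0 : (0 : ℤ) ∈ A) (y F : ℤ → ℝ) (b : ℝ)
    (hy0 : ∀ x, 0 ≤ y x) (hyb : ∀ x, y x ≤ b) (hb : y 0 = b) (hF0 : ∀ c, 0 ≤ F c)
    (hF1 : ∀ i ∈ A, ∀ j ∈ A, y i ≤ F (i + j)) :
    ∑ x ∈ A, y x + (A.card - 1 : ℝ) * b ≤ ∑ c ∈ A + A, min (F c) b := by
  classical
  obtain ⟨u, hu, hu1, hu2, -⟩ := path_exists A ⟨0, h0⟩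
  have hb0 : 0 ≤ b := hb ▸ hy0 0
  have := path_sum (A + A) A (A.erase 0) ∅ (fun c => min (F c) b)
    (fun c => le_min (hF0 c) hb0) u
    (fun x hx => by simpa using Finset.add_mem_add hx h0) (by simp)
    (fun x hx => Finset.add_mem_add (Finset.mem_of_mem_erase hx) (hu x))
    (fun x hx => hu1 x (Finset.ne_of_mem_erase hx))
    (fun x hx x' hx' => hu2 x x' (Finset.ne_of_mem_erase hx) (Finset.ne_of_mem_erase hx'))
    (by simp) (by simp)
  refine le_trans ?_ this
  have e1 : ∑ c ∈ A, b ≤ ∑ c ∈ A, min (F c) b := by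
    refine Finset.sum_le_sum (fun c hc => le_min ?_ le_rfl)
    have := hF1 0 h0 c hc
    rwa [zero_add, hb] at this
  have e2 : ∑ x ∈ A.erase 0, y x ≤ ∑ x ∈ A.erase 0, min (F (x + u x)) b :=
    Finset.sum_le_sum (fun x hx =>
      le_min (hF1 x (Finset.mem_of_mem_erase hx) _ (hu x)) (hyb x))
  have e3 : ∑ x ∈ A.erase 0, y x + y 0 = ∑ x ∈ A, y x := Finset.sum_erase_add _ _ h0
  simp only [Finset.sum_const, nsmul_eq_mul, Finset.sum_empty] at *
  linarith

lemma split_sum (W : Finset ℤ) (F : ℤ → ℝ) (b : ℝ) :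
    ∑ c ∈ W, F c = ∑ c ∈ W, min (F c) b + ∑ c ∈ W, max (F c - b) 0 := by
  rw [← Finset.sum_add_distrib]
  refine Finset.sum_congr rfl (fun c _ => ?_)
  rcases le_total (F c) b with h | h
  · rw [min_eq_left h, max_eq_right (by linarith)]; ring
  · rw [min_eq_right h, max_eq_left (by linarith)]; ring

lemma case_one (A N T : Finset ℤ) (hs : 6 ≤ A.card) (hA : A = N ∪ T) (hNT : Disjoint N T)
    (h0 : (0 : ℤ) ∈ N) (hT : T.Nonempty) (y F : ℤ → ℝ) (b : ℝ)
    (hy0 : ∀ x, 0 ≤ y x) (hyb : ∀ x, y x ≤ b) (hb : y 0 = b) (hF0 : ∀ c, 0 ≤ F c)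
    (hF1 : ∀ i ∈ A, ∀ j ∈ A, y i ≤ F (i + j))
    (hF2 : ∀ i ∈ N, ∀ j ∈ T, 2 * y i ≤ F (i + j)) :
    5 * ∑ x ∈ A, y x ≤ 2 * ∑ c ∈ A + A, F c := by
  classical
  have hb0 : 0 ≤ b := hb ▸ hy0 0
  have hNA : N ⊆ A := hA ▸ Finset.subset_union_left
  have hTA : T ⊆ A := hA ▸ Finset.subset_union_right
  have hbase := base_sum A (hNA h0) y F b hy0 hyb hb hF0 hF1
  rw [split_sum (A + A) F b]
  obtain ⟨u, hu, hu1, hu2, -⟩ := path_exists T hT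
  have hp := path_sum (A + A) T (N.erase 0) ∅ (fun c => max (F c - b) 0)
    (fun c => le_max_right _ _) u
    (fun x hx => by simpa using Finset.add_mem_add (hTA hx) (hNA h0)) (by simp)
    (fun x hx => Finset.add_mem_add (hNA (Finset.mem_of_mem_erase hx)) (hTA (hu x)))
    (fun x hx => hu1 x (Finset.ne_of_mem_erase hx))
    (fun x hx x' hx' => hu2 x x' (Finset.ne_of_mem_erase hx) (Finset.ne_of_mem_erase hx'))
    (by simp) (by simp)
  have e1 : ∑ c ∈ T, b ≤ ∑ c ∈ T, max (F c - b) 0 := by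
    refine Finset.sum_le_sum (fun c hc => le_max_of_le_left ?_)
    have := hF2 0 h0 c hc
    rw [zero_add, hb] at this
    linarith
  have e2 : ∑ x ∈ N.erase 0, (3 / 2 * y x - 3 / 4 * b)
      ≤ ∑ x ∈ N.erase 0, max (F (x + u x) - b) 0 := by
    refine Finset.sum_le_sum (fun x hx => ?_)
    have h1 := hF2 x (Finset.mem_of_mem_erase hx) _ (hu x)
    have h2 := le_max_left (F (x + u x) - b) 0
    have h3 := le_max_right (F (x + u x) - b) 0
    linarith
  have e3 : ∑ x ∈ N.erase 0, y x + y 0 = ∑ x ∈ N, y x := Finset.sum_erase_add _ _ h0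
  have e4 : ∑ x ∈ A, y x = ∑ x ∈ N, y x + ∑ x ∈ T, y x := by
    rw [hA, Finset.sum_union hNT]
  have e5 : ∑ x ∈ T, y x ≤ ∑ x ∈ T, b := Finset.sum_le_sum (fun x _ => hyb x)
  have e6 : A.card = N.card + T.card := by rw [hA, Finset.card_union_of_disjoint hNT]
  have e7 : (N.erase 0).card + 1 = N.card := Finset.card_erase_add_one h0
  have hT1 : 1 ≤ T.card := hT.card_pos
  rw [Finset.sum_sub_distrib, ← Finset.mul_sum] at e2
  simp only [Finset.sum_const, nsmul_eq_mul, Finset.sum_empty] at *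
  have c1 : (A.card : ℝ) = N.card + T.card := by exact_mod_cast e6
  have c2 : ((N.erase 0).card : ℝ) + 1 = N.card := by exact_mod_cast e7
  have c3 : (7 : ℝ) ≤ A.card + T.card := by exact_mod_cast (by omega : 7 ≤ A.card + T.card)
  have c4 : 0 ≤ ((A.card : ℝ) + T.card - 7) * b := mul_nonneg (by linarith) hb0
  rw [c1] at c4 hbase
  have c5 : ((N.erase 0).card : ℝ) = N.card - 1 := by linarith
  rw [c5] at e2
  linarith

lemma case_two (A : Finset ℤ) (hs : 6 ≤ A.card)
    (h0 : (0 : ℤ) ∈ A) (y F : ℤ → ℝ) (b : ℝ)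
    (hy0 : ∀ x, 0 ≤ y x) (hyb : ∀ x, y x ≤ b) (hb : y 0 = b) (hF0 : ∀ c, 0 ≤ F c)
    (hF1 : ∀ i ∈ A, ∀ j ∈ A, y i ≤ F (i + j))
    (he : ∀ x ∈ A, b + y x / 2 ≤ F x ∨ 2 * y x ≤ F x)
    (hp : ∀ i ∈ A, ∀ j ∈ A, y j ≤ y i → 2 * b < 3 * y j →
      (y i + y j / 2 ≤ F (i + j) ∨ (2 * y i ≤ F i ∧ 2 * y j ≤ F j))) :
    5 * ∑ x ∈ A, y x ≤ 2 * ∑ c ∈ A + A, F c := by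
  classical
  have hb0 : 0 ≤ b := hb ▸ hy0 0
  have hbase := base_sum A h0 y F b hy0 hyb hb hF0 hF1
  rw [split_sum (A + A) F b]
  have hAA : A ⊆ A + A := fun x hx => by simpa using Finset.add_mem_add hx h0
  obtain ⟨E, hE⟩ : ∃ E : ℤ → ℝ, E = fun c => max (F c - b) 0 := ⟨_, rfl⟩
  have hE1 : ∀ c, F c - b ≤ E c := fun c => by rw [hE]; exact le_max_left _ _
  have hE0 : ∀ c, 0 ≤ E c := fun c => by rw [hE]; exact le_max_right _ _
  have hEs : ∑ c ∈ A + A, max (F c - b) 0 = ∑ c ∈ A + A, E c := by rw [hE]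
  rw [hEs]
  obtain ⟨D, hD⟩ : ∃ D : ℤ → ℝ, D = fun c => E c + if c ∈ A then b - 3 / 2 * y c else 0 :=
    ⟨_, rfl⟩
  have hDA : ∀ c ∈ A, D c = E c + (b - 3 / 2 * y c) := fun c hc => by rw [hD]; simp [hc]
  have hDn : ∀ c, c ∉ A → D c = E c := fun c hc => by rw [hD]; simp [hc]
  have hDs : ∑ c ∈ A + A, D c = ∑ c ∈ A + A, E c + (A.card * b - 3 / 2 * ∑ x ∈ A, y x) := by
    rw [hD, Finset.sum_add_distrib, ← Finset.sum_filter, Finset.filter_mem_eq_inter,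
      Finset.inter_eq_right.2 hAA, Finset.sum_sub_distrib, ← Finset.mul_sum]
    simp
  suffices hgoal : b ≤ ∑ c ∈ A + A, D c by
    rw [hDs] at hgoal
    linarith
  let L := A.filter (fun x => 2 * b < 3 * y x)
  have hLA : L ⊆ A := Finset.filter_subset _ _
  have hLy : ∀ x ∈ L, 2 * b < 3 * y x := fun x hx => (Finset.mem_filter.1 hx).2
  have hcase : ∀ x ∈ A, 3 * y x ≤ 2 * b → y x / 2 ≤ D x := by
    intro x hx h
    rw [hDA x hx]
    have := hE1 x
    rcases he x hx with h' | h' <;> linarith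
  have hsmall : ∀ x ∈ A, 3 * y x ≤ 2 * b → b / 4 ≤ D x := by
    intro x hx h
    have h1 := hcase x hx h
    have h2 := hDA x hx
    have := hE0 x
    linarith
  have hlarge : ∀ x ∈ A, 2 * b < 3 * y x → b - y x ≤ D x := by
    intro x hx h
    rw [hDA x hx]
    have := hE1 x
    rcases he x hx with h' | h' <;> linarith
  have hD0 : ∀ c, 0 ≤ D c := by
    intro c
    by_cases hc : c ∈ A
    · by_cases h : 2 * b < 3 * y c
      · have := hlarge c hc h
        have := hyb c
        linarith
      · have := hsmall c hc (not_lt.1 h)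
        linarith
    · rw [hDn c hc]; exact hE0 c
  have hnL : ∀ x ∈ A \ L, b / 4 ≤ D x := by
    intro x hx
    obtain ⟨hx1, hx2⟩ := Finset.mem_sdiff.1 hx
    refine hsmall x hx1 ?_
    by_contra h
    exact hx2 (Finset.mem_filter.2 ⟨hx1, not_le.1 h⟩)
  have hcardAL : (A \ L).card + L.card = A.card := Finset.card_sdiff_add_card_eq_card hLA
  -- if `L` has at most two elements
  by_cases hL2 : L.card ≤ 2
  · have h4 : 4 ≤ (A \ L).card := by omega
    have h4' : (4 : ℝ) ≤ (A \ L).card := by exact_mod_cast h4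
    have h5 : ∑ c ∈ A \ L, b / 4 ≤ ∑ c ∈ A \ L, D c := Finset.sum_le_sum hnL
    have h6 : ∑ c ∈ A \ L, D c ≤ ∑ c ∈ A + A, D c :=
      Finset.sum_le_sum_of_subset_of_nonneg (Finset.sdiff_subset.trans hAA) (fun c _ _ => hD0 c)
    simp only [Finset.sum_const, nsmul_eq_mul] at h5
    nlinarith
  have h0L : (0 : ℤ) ∈ L := by
    by_contra h
    have : ¬ (2 * b < 3 * y 0) := fun h' => h (Finset.mem_filter.2 ⟨h0, h'⟩)
    have hb00 : b = 0 := by rw [hb] at this; linarith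
    have hLe : L = ∅ := by
      refine Finset.eq_empty_of_forall_notMem (fun x hx => ?_)
      have h1 := hLy x hx
      have h2 := hyb x
      linarith
    rw [hLe] at hL2
    simp at hL2
  obtain ⟨u, hu, hu1, hu2, hu3⟩ := path_exists L ⟨0, h0L⟩
  let L' := L.erase 0
  have hL'c : L'.card + 1 = L.card := Finset.card_erase_add_one h0L
  have hL'L : ∀ x ∈ L', x ∈ L := fun x hx => Finset.mem_of_mem_erase hx
  have hL'0 : ∀ x ∈ L', x ≠ 0 := fun x hx => Finset.ne_of_mem_erase hx
  -- pure or star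
  have hpure : ∀ x ∈ L', (b / 3 ≤ D x) ∨
      ((y x ≤ y (u x) → y (u x) + y x / 2 - b ≤ E (x + u x)) ∧
       (y (u x) ≤ y x → y x + y (u x) / 2 - b ≤ E (x + u x))) := by
    intro x hx
    have hxL := hL'L x hx
    have hxA := hLA hxL
    have huL := hu x
    have huA := hLA huL
    have hE' := hE1 (x + u x)
    have hstar : 2 * y x ≤ F x → b / 3 ≤ D x := by
      intro h
      rw [hDA x hxA]
      have := hE1 x
      have := hLy x hxL
      linarith
    by_cases hst : 2 * y x ≤ F x
    · exact Or.inl (hstar hst)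
    · right
      constructor
      · intro h
        rcases hp (u x) huA x hxA h (hLy x hxL) with h' | h'
        · rw [add_comm (u x) x] at h'
          linarith
        · exact absurd h'.2 hst
      · intro h
        rcases hp x hxA (u x) huA h (hLy _ huL) with h' | h'
        · linarith
        · exact absurd h'.1 hst
  have hthird : ∀ x ∈ L', b / 3 ≤ D x + D (x + u x) := by
    intro x hx
    rcases hpure x hx with h | ⟨h1, h2⟩
    · have := hD0 (x + u x)
      linarith
    have hxL := hL'L x hx
    have a1 := hlarge x (hLA hxL) (hLy x hxL)
    have a2 := hLy x hxL
    have a3 := hLy _ (hu x)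
    have a4 := hyb x
    have a5 := hyb (u x)
    by_cases hc : x + u x ∈ A
    · have hcL : 3 * y (x + u x) ≤ 2 * b := by
        by_contra h
        exact hu1 x (hL'0 x hx) (Finset.mem_filter.2 ⟨hc, not_le.1 h⟩)
      have a6 := hcase _ hc hcL
      have a7 := hDA _ hc
      rcases le_total (y x) (y (u x)) with h | h
      · have := h1 h
        linarith
      · have := h2 h
        linarith
    · have a7 := hDn _ hc
      rcases le_total (y x) (y (u x)) with h | h
      · have := h1 h
        linarith
      · have := h2 h
        linarith
  by_cases hL4 : 4 ≤ L.card
  · have h3 : (3 : ℝ) ≤ L'.card := by exact_mod_cast (by omega : 3 ≤ L'.card)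
    have hps := path_sum (A + A) L' L' ∅ D hD0 u
      (fun x hx => hAA (hLA (hL'L x hx))) (by simp)
      (fun x hx => Finset.add_mem_add (hLA (hL'L x hx)) (hLA (hu x)))
      (fun x hx h => hu1 x (hL'0 x hx) (hL'L _ h))
      (fun x hx x' hx' => hu2 x x' (hL'0 x hx) (hL'0 x' hx'))
      (by simp) (by simp)
    have h5 : ∑ c ∈ L', b / 3 ≤ ∑ c ∈ L', (D c + D (c + u c)) := Finset.sum_le_sum hthird
    rw [Finset.sum_add_distrib] at h5
    simp only [Finset.sum_const, nsmul_eq_mul, Finset.sum_empty] at h5 hps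
    nlinarith
  -- `L` has three elements
  have hL3 : L.card = 3 := by omega
  have hL'2 : L'.card = 2 := by omega
  let Q := L'.image (fun x => x + u x)
  have hQ : Q.card ≤ 2 := hL'2 ▸ Finset.card_image_le
  let R := (A \ L) \ Q
  have hps := path_sum (A + A) L' L' R D hD0 u
      (fun x hx => hAA (hLA (hL'L x hx)))
      (fun x hx => hAA (Finset.mem_sdiff.1 (Finset.mem_sdiff.1 hx).1).1)
      (fun x hx => Finset.add_mem_add (hLA (hL'L x hx)) (hLA (hu x)))
      (fun x hx h => hu1 x (hL'0 x hx) (hL'L _ h))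
      (fun x hx x' hx' => hu2 x x' (hL'0 x hx) (hL'0 x' hx'))
      (by
        rw [Finset.disjoint_left]
        intro x hx hx'
        exact (Finset.mem_sdiff.1 (Finset.mem_sdiff.1 hx).1).2 (hL'L x hx'))
      (fun x hx h => (Finset.mem_sdiff.1 h).2 (Finset.mem_image_of_mem _ hx))
  have hR : ∑ c ∈ R, b / 4 ≤ ∑ c ∈ R, D c :=
    Finset.sum_le_sum (fun c hc => hnL c (Finset.mem_sdiff.1 hc).1)
  have hRc : R.card + ((A \ L) ∩ Q).card = (A \ L).card := Finset.card_sdiff_add_card_inter _ _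
  have hIQ : ((A \ L) ∩ Q).card ≤ Q.card := Finset.card_le_card Finset.inter_subset_right
  rw [← Finset.sum_add_distrib] at hps
  simp only [Finset.sum_const, nsmul_eq_mul] at hR
  by_cases hR2 : 2 ≤ R.card
  · have h5 : ∑ c ∈ L', b / 3 ≤ ∑ c ∈ L', (D c + D (c + u c)) := Finset.sum_le_sum hthird
    simp only [Finset.sum_const, nsmul_eq_mul, hL'2] at h5
    have hR2' : (2 : ℝ) ≤ R.card := by exact_mod_cast hR2
    push_cast at h5
    nlinarith
  · have hR1 : 1 ≤ R.card := by omega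
    have hR1' : (1 : ℝ) ≤ R.card := by exact_mod_cast hR1
    have hQsub : (A \ L) ∩ Q = Q :=
      Finset.eq_of_subset_of_card_le Finset.inter_subset_right (by omega)
    have hex : ∃ x ∈ L, x ≠ 0 := by
      have : L'.Nonempty := by rw [← Finset.card_pos]; omega
      obtain ⟨x, hx⟩ := this
      exact ⟨x, hL'L x hx, hL'0 x hx⟩
    obtain ⟨x, hxL, hx0, hux⟩ := hu3 h0L hex
    have hx : x ∈ L' := Finset.mem_erase.2 ⟨hx0, hxL⟩
    have hcQ : x + u x ∈ Q := Finset.mem_image_of_mem (fun x => x + u x) hx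
    have hcAL : x + u x ∈ A \ L := by
      rw [← hQsub] at hcQ
      exact (Finset.mem_inter.1 hcQ).1
    have hc := (Finset.mem_sdiff.1 hcAL).1
    have hcL : 3 * y (x + u x) ≤ 2 * b := by
      by_contra h
      exact hu1 x (hL'0 x hx) (Finset.mem_filter.2 ⟨hc, not_le.1 h⟩)
    have a6 := hcase _ hc hcL
    have a7 := hDA _ hc
    have a8 := hsmall _ hc hcL
    have a1 := hlarge x (hLA hxL) (hLy x hxL)
    have hbig : 4 / 9 * b ≤ D x + D (x + u x) := by
      rcases hpure x hx with h | ⟨h1, h2⟩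
      · linarith
      · have h3 := h1 (by rw [hux])
        have h4 : y (u x) = y x := by rw [hux]
        have := hyb x
        linarith
    have h5 : ∑ c ∈ L'.erase x, b / 3 ≤ ∑ c ∈ L'.erase x, (D c + D (c + u c)) :=
      Finset.sum_le_sum (fun c hc => hthird c (Finset.mem_of_mem_erase hc))
    have h6 := Finset.sum_erase_add L' (fun c => D c + D (c + u c)) hx
    have h7 : (L'.erase x).card + 1 = L'.card := Finset.card_erase_add_one hx
    have h8 : (L'.erase x).card = 1 := by omega
    simp only [Finset.sum_const, nsmul_eq_mul, h8] at h5
    push_cast at h5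
    nlinarith

lemma two_cosets_s15 {G : Type*} [AddCommGroup G] [DecidableEq G] (H : AddSubgroup G)
    (X Y : Finset G) (hX : ∀ x ∈ X, ∀ x' ∈ X, x - x' ∈ H)
    (hY : ¬ ∀ x ∈ Y, ∀ x' ∈ Y, x - x' ∈ H) : 2 * X.card ≤ (X + Y).card := by
  push Not at hY
  obtain ⟨y, hy, y', hy', hyy⟩ := hY
  have hdisj : Disjoint (X + {y}) (X + {y'}) := by
    rw [Finset.disjoint_left]
    intro z hz hz'
    obtain ⟨x, hx, w, hw, rfl⟩ := Finset.mem_add.1 hz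
    obtain ⟨x', hx', w', hw', e⟩ := Finset.mem_add.1 hz'
    rw [Finset.mem_singleton] at hw hw'
    subst hw hw'
    apply hyy
    have : w - w' = x' - x := by
      rw [sub_eq_sub_iff_add_eq_add, add_comm, ← e]
    rw [this]
    exact hX x' hx' x hx
  have hsub : (X + {y}) ∪ (X + {y'}) ⊆ X + Y :=
    Finset.union_subset (Finset.add_subset_add_left (by simpa using hy))
      (Finset.add_subset_add_left (by simpa using hy'))
  have := Finset.card_le_card hsub
  rw [Finset.card_union_of_disjoint hdisj, Finset.card_add_singleton,
    Finset.card_add_singleton] at this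
  omega

lemma card_le_subgroup {G : Type*} [AddCommGroup G] [Finite G] [DecidableEq G]
    (H : AddSubgroup G) (X : Finset G) (hne : X.Nonempty) (hX : ∀ x ∈ X, ∀ x' ∈ X, x - x' ∈ H) :
    (X + X).card ≤ Nat.card H := by
  classical
  have := Fintype.ofFinite G
  obtain ⟨x0, hx0⟩ := hne
  rw [Nat.card_eq_fintype_card, Fintype.card_subtype]
  rw [← Finset.card_add_singleton (Finset.univ.filter (fun g => g ∈ H)) (x0 + x0)]
  apply Finset.card_le_card
  intro z hz
  obtain ⟨x, hx, x', hx', rfl⟩ := Finset.mem_add.1 hz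
  refine Finset.mem_add.2 ⟨(x - x0) + (x' - x0), ?_, _, Finset.mem_singleton_self _, by abel⟩
  simp only [Finset.mem_filter, Finset.mem_univ, true_and]
  exact H.add_mem (hX x hx x0 hx0) (hX x' hx' x0 hx0)

lemma main_aux {G : Type*} [AddCommGroup G] [Finite G] [DecidableEq G]
    (A : Finset ℤ) (hs : 6 ≤ A.card) (h0 : (0 : ℤ) ∈ A) (C : ℤ → Finset G)
    (hC : ∀ i ∈ A, (C i).Nonempty) (hmax : ∀ i, (C i).card ≤ (C 0).card)
    (F : ℤ → ℕ) (hF : ∀ i ∈ A, ∀ j ∈ A, (C i + C j).card ≤ F (i + j))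
    (hdbl : 2 * ∑ c ∈ A + A, F c < 5 * ∑ x ∈ A, (C x).card) :
    ∃ H : AddSubgroup G, 2 * Nat.card H < 3 * (C 0).card ∧
      ∀ i ∈ A, ∀ x ∈ C i, ∀ x' ∈ C i, x - x' ∈ H := by
  classical
  have hdR : ¬ (5 * ∑ x ∈ A, ((C x).card : ℝ) ≤ 2 * ∑ c ∈ A + A, (F c : ℝ)) := by
    rw [not_le]
    exact_mod_cast hdbl
  have hF1 : ∀ i ∈ A, ∀ j ∈ A, (C i).card ≤ F (i + j) := fun i hi j hj =>
    (Finset.card_le_card_add_right (hC j hj)).trans (hF i hi j hj)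
  have hF1R : ∀ i ∈ A, ∀ j ∈ A, ((C i).card : ℝ) ≤ F (i + j) := fun i hi j hj => by
    exact_mod_cast hF1 i hi j hj
  by_cases hcase : 2 * (C 0 + C 0).card < 3 * (C 0).card
  · rcases key_pair (C 0) (C 0) (hC 0 h0) (hC 0 h0) with h | h | ⟨H, hH1, hH2, -⟩
    · omega
    · omega
    refine ⟨H, by omega, ?_⟩
    by_contra hcon
    let N := A.filter (fun i => ∀ x ∈ C i, ∀ x' ∈ C i, x - x' ∈ H)
    let T := A.filter (fun i => ¬ ∀ x ∈ C i, ∀ x' ∈ C i, x - x' ∈ H)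
    apply hdR
    refine case_one A N T hs (Finset.filter_union_filter_not_eq _ _).symm
      (Finset.disjoint_filter_filter_not _ _ _) (Finset.mem_filter.2 ⟨h0, hH2⟩) ?_
      (fun x => ((C x).card : ℝ)) (fun c => (F c : ℝ)) ((C 0).card : ℝ)
      (fun x => by positivity) (fun x => by exact_mod_cast hmax x) rfl (fun x => by positivity)
      hF1R ?_
    · by_contra hT
      rw [Finset.not_nonempty_iff_eq_empty] at hT
      apply hcon
      intro i hi
      by_contra h
      have : i ∈ T := Finset.mem_filter.2 ⟨hi, h⟩
      rw [hT] at this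
      simp at this
    · intro i hi j hj
      obtain ⟨hi1, hi2⟩ := Finset.mem_filter.1 hi
      obtain ⟨hj1, hj2⟩ := Finset.mem_filter.1 hj
      have := (two_cosets_s15 H _ _ hi2 hj2).trans (hF i hi1 j hj1)
      exact_mod_cast this
  · exfalso
    apply hdR
    -- a subgroup one of whose cosets contains `C 0` is large
    have hbigH : ∀ H : AddSubgroup G, (∀ x ∈ C 0, ∀ x' ∈ C 0, x - x' ∈ H) →
        3 * (C 0).card ≤ 2 * Nat.card H := fun H hH => by
      have := card_le_subgroup H (C 0) (hC 0 h0) hH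
      omega
    have hFz : ∀ i ∈ A, (C i + C 0).card ≤ F i := fun i hi => by
      have := hF i hi 0 h0
      rwa [add_zero] at this
    refine case_two A hs h0 (fun x => ((C x).card : ℝ)) (fun c => (F c : ℝ)) ((C 0).card : ℝ)
      (fun x => by positivity) (fun x => by exact_mod_cast hmax x) rfl (fun x => by positivity)
      hF1R ?_ ?_
    · intro x hx
      have h1 := hFz x hx
      rw [add_comm] at h1
      have h2 := hmax x
      have : 2 * (C 0).card + (C x).card ≤ 2 * F x ∨ 2 * (C x).card ≤ F x := by
        rcases key_pair (C 0) (C x) (hC 0 h0) (hC x hx) with h | h | ⟨H, hH1, hH2, hH3⟩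
        · left; omega
        · right; omega
        · left
          have := hbigH H hH2
          omega
      rcases this with h | h
      · left
        have : (2 * (C 0).card + (C x).card : ℝ) ≤ 2 * F x := by exact_mod_cast h
        linarith
      · right
        exact_mod_cast h
    · intro i hi j hj hji hj2
      have hji' : (C j).card ≤ (C i).card := by exact_mod_cast hji
      have hj2' : 2 * (C 0).card < 3 * (C j).card := by exact_mod_cast hj2
      have h1 := hF i hi j hj
      have h2 := hmax i
      have : 2 * (C i).card + (C j).card ≤ 2 * F (i + j) ∨
          (2 * (C i).card ≤ F i ∧ 2 * (C j).card ≤ F j) := by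
        rcases key_pair (C i) (C j) (hC i hi) (hC j hj) with h | h | ⟨H, hH1, hH2, hH3⟩
        · left; omega
        · left; omega
        · by_cases hz : ∀ x ∈ C 0, ∀ x' ∈ C 0, x - x' ∈ H
          · left
            have := hbigH H hz
            omega
          · right
            exact ⟨(two_cosets_s15 H _ _ hH2 hz).trans (hFz i hi),
              (two_cosets_s15 H _ _ hH3 hz).trans (hFz j hj)⟩
      rcases this with h | h
      · left
        have : (2 * (C i).card + (C j).card : ℝ) ≤ 2 * F (i + j) := by exact_mod_cast h
        linarith
      · right
        exact ⟨by exact_mod_cast h.1, by exact_mod_cast h.2⟩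

theorem all_Bi_in_cosets_of_small_doubling (s d : ℕ) (hs : 6 ≤ s) (hd : 0 < d)
    (a : ℕ → ℤ) (ha0 : a 0 = 0)
    (hinj : ∀ i < s, ∀ j < s, a i = a j → i = j)
    (hgcd : (Finset.range s).gcd a = 1)
    (B : ℕ → Finset (ZMod d)) (hBne : ∀ i < s, (B i).Nonempty) (h0B : (0 : ZMod d) ∈ B 0)
    (hord : ∀ i < s, (B i).card ≤ (B 0).card)
    (Btil : Finset (ℤ × ZMod d))
    (hBtil : Btil = (Finset.range s).biUnion (fun i => {a i} ×ˢ B i))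
    (hdbl : 2 * (Btil + Btil).card < 5 * Btil.card) :
    ∃ H : AddSubgroup (ZMod d), 2 * Nat.card H < 3 * (B 0).card ∧
      ∀ i < s, ∃ x : ZMod d, ∀ z ∈ B i, z - x ∈ H := by
  classical
  haveI : NeZero d := ⟨hd.ne'⟩
  have hmem : ∀ c z, (c, z) ∈ Btil ↔ ∃ i < s, a i = c ∧ z ∈ B i := by
    intro c z
    rw [hBtil]
    simp only [Finset.mem_biUnion, Finset.mem_range, Finset.mem_product, Finset.mem_singleton]
    constructor
    · rintro ⟨i, hi, h1, h2⟩
      exact ⟨i, hi, h1.symm, h2⟩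
    · rintro ⟨i, hi, h1, h2⟩
      exact ⟨i, hi, h1.symm, h2⟩
  let A : Finset ℤ := (Finset.range s).image a
  have hAmem : ∀ c, c ∈ A ↔ ∃ i < s, a i = c := fun c => by simp [A]
  let C : ℤ → Finset (ZMod d) := fun c => Finset.univ.filter (fun z => (c, z) ∈ Btil)
  have hCmem : ∀ c z, z ∈ C c ↔ (c, z) ∈ Btil := fun c z => by simp [C]
  have hCB : ∀ i < s, C (a i) = B i := by
    intro i hi
    ext z
    rw [hCmem, hmem]
    constructor
    · rintro ⟨j, hj, h1, h2⟩
      rwa [← hinj j hj i hi h1]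
    · intro h
      exact ⟨i, hi, rfl, h⟩
  have hC0 : C 0 = B 0 := by rw [← ha0]; exact hCB 0 (by omega)
  let F : ℤ → ℕ := fun c => ((Btil + Btil).filter (fun p => p.1 = c)).card
  have hsA : A.card = s := by
    rw [Finset.card_image_of_injOn, Finset.card_range]
    intro i hi j hj h
    exact hinj i (by simpa using hi) j (by simpa using hj) h
  have hfst : ∀ p ∈ Btil, p.1 ∈ A := by
    rintro ⟨c, z⟩ hp
    obtain ⟨i, hi, h, -⟩ := (hmem c z).1 hp
    exact (hAmem _).2 ⟨i, hi, h⟩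
  have hsumF : (Btil + Btil).card = ∑ c ∈ A + A, F c := by
    refine Finset.card_eq_sum_card_fiberwise (f := Prod.fst) ?_
    intro p hp
    obtain ⟨q, hq, r, hr, rfl⟩ := Finset.mem_add.1 hp
    exact Finset.add_mem_add (hfst q hq) (hfst r hr)
  have hsumC : Btil.card = ∑ c ∈ A, (C c).card := by
    rw [Finset.card_eq_sum_card_fiberwise (f := Prod.fst) (t := A) hfst]
    refine Finset.sum_congr rfl (fun c _ => ?_)
    symm
    refine Finset.card_bij (fun z _ => (c, z)) ?_ ?_ ?_
    · intro z hz
      exact Finset.mem_filter.2 ⟨(hCmem c z).1 hz, rfl⟩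
    · intro z _ z' _ h
      exact (Prod.ext_iff.1 h).2
    · rintro ⟨c', z⟩ hp
      obtain ⟨h1, h2⟩ := Finset.mem_filter.1 hp
      simp only at h2
      subst h2
      exact ⟨z, (hCmem _ z).2 h1, rfl⟩
  obtain ⟨H, hH1, hH2⟩ := main_aux A (by omega) ((hAmem 0).2 ⟨0, by omega, ha0⟩) C
    (fun c hc => by
      obtain ⟨i, hi, rfl⟩ := (hAmem c).1 hc
      rw [hCB i hi]; exact hBne i hi)
    (fun c => by
      by_cases hc : c ∈ A
      · obtain ⟨i, hi, rfl⟩ := (hAmem c).1 hc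
        rw [hCB i hi, hC0]; exact hord i hi
      · have : C c = ∅ := by
          refine Finset.eq_empty_of_forall_notMem (fun z hz => hc ?_)
          exact hfst _ ((hCmem c z).1 hz)
        rw [this]; simp)
    F
    (fun i _ j _ => by
      refine Finset.card_le_card_of_injOn (fun z => (i + j, z)) ?_ ?_
      · intro z hz
        obtain ⟨u, hu, v, hv, rfl⟩ := Finset.mem_add.1 hz
        exact Finset.mem_filter.2
          ⟨Finset.add_mem_add ((hCmem i u).1 hu) ((hCmem j v).1 hv), rfl⟩
      · intro z _ z' _ h
        exact (Prod.ext_iff.1 h).2)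
    (by rw [← hsumF, ← hsumC]; exact hdbl)
  refine ⟨H, by rwa [hC0] at hH1, fun i hi => ?_⟩
  obtain ⟨x, hx⟩ := hBne i hi
  refine ⟨x, fun z hz => ?_⟩
  rw [← hCB i hi] at hx hz
  exact hH2 (a i) ((hAmem _).2 ⟨i, hi, rfl⟩) z hz x hx
end
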